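/- Let W be a monoidal category and F : W ⥤ 𝒵 a lax monoidal functor such that for every object X of W the integer ⟨F.obj X⟩ belongs to the set {-1, 0, 1}. Then ⟨F.obj X⟩ = 0 for every object X of W. (This is the computation, from the paper's Remark 3.3, showing that the equalizer in the category of monoidal categories and lax monoidal functors of the constant functor at a and the functor g sending -1, 0, 1 to a and all other integers to b is the terminal monoidal category, included via 0.) -/

import Mathlib

open CategoryTheory MonoidalCategory

/-- The discrete monoidal category on the monoid `Multiplicative ℤ`. -/
abbrev 𝒵 : Type := CategoryTheory.Discrete (Multiplicative ℤ)

/-! The only morphisms of a discrete category are identities, so the structure maps of a lax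
monoidal functor to a discrete monoidal category are equalities and the values of the functor form
a submonoid. In a cancellative monoid the elements of a finite submonoid have finite order, so they
are trivial when the monoid has no torsion. -/

theorem submonoid_eq_bot_of_finite {M : Type*} [LeftCancelMonoid M] [IsMulTorsionFree M]
    {S : Submonoid M} (hS : (S : Set M).Finite) : S = ⊥ := by
  refine S.eq_bot_iff_forall.2 fun x hx ↦ ?_
  have powers_finite : (Submonoid.powers x : Set M).Finite :=
    hS.subset (Submonoid.powers_le.2 hx)
  exact (finite_powers.1 powers_finite).eq_one'

section LaxMonoidal

variable {W : Type*} [Category W] [MonoidalCategory W]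

section Monoid

variable {M : Type*} [Monoid M] (F : W ⥤ Discrete M) [F.LaxMonoidal]

theorem laxMonoidal_obj_tensorUnit_as : (F.obj (𝟙_ W)).as = 1 :=
  (Discrete.eq_of_hom (Functor.LaxMonoidal.ε F)).symm

theorem laxMonoidal_obj_tensorObj_as (X Y : W) :
    (F.obj (X ⊗ Y)).as = (F.obj X).as * (F.obj Y).as :=
  (Discrete.eq_of_hom (Functor.LaxMonoidal.μ F X Y)).symm

/-- The submonoid of values on objects of a lax monoidal functor to the discrete monoidal category
on a monoid. -/
def laxMonoidalRange : Submonoid M where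
  carrier := Set.range fun X ↦ (F.obj X).as
  one_mem' := ⟨𝟙_ W, laxMonoidal_obj_tensorUnit_as F⟩
  mul_mem' := by
    rintro _ _ ⟨X, rfl⟩ ⟨Y, rfl⟩
    exact ⟨X ⊗ Y, laxMonoidal_obj_tensorObj_as F X Y⟩

end Monoid

theorem laxMonoidal_toAdd_obj_eq_zero_of_mem_pm_one_general
    {M : Type*} [LeftCancelMonoid M] [IsMulTorsionFree M] (F : W ⥤ Discrete M) [F.LaxMonoidal]
    (hF : (Set.range fun X ↦ (F.obj X).as).Finite) (X : W) : (F.obj X).as = 1 := by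
  have range_eq_bot : laxMonoidalRange F = ⊥ := submonoid_eq_bot_of_finite hF
  exact (laxMonoidalRange F).eq_bot_iff_forall.1 range_eq_bot _ ⟨X, rfl⟩

end LaxMonoidal

/-- If a lax monoidal functor `F` from a monoidal category `W` to `𝒵` takes all of
its values (as integers) in `{-1, 0, 1}`, then all of its values are `0`. -/
theorem laxMonoidal_toAdd_obj_eq_zero_of_mem_pm_one
    {W : Type*} [Category W] [MonoidalCategory W]
    (F : W ⥤ 𝒵) [F.LaxMonoidal]
    (h : ∀ X : W, Multiplicative.toAdd (F.obj X).as ∈ ({-1, 0, 1} : Set ℤ)) :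
    ∀ X : W, Multiplicative.toAdd (F.obj X).as = 0 :=
  fun X ↦ toAdd_eq_zero.2 <| laxMonoidal_toAdd_obj_eq_zero_of_mem_pm_one_general F
    (((Set.toFinite {-1, 0, 1}).preimage Multiplicative.toAdd.injective.injOn).subset
      (Set.range_subset_iff.2 h)) X
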